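/- arXiv:2502.02826 — 2 statements merged into one kernel-verified Lean document; each statement's English description precedes it below -/
import Mathlib

section
/- For a complete multipartite graph Γ with parts V₁,…,V_m and any n ≥ 1, the minimum number of forests covering the edges of the multigraph n∗Γ (each edge replaced by n parallel edges) equals ⌈ n·|E(Γ)| / (|V(Γ)|−1) ⌉. -/
open SimpleGraph

variable {V : Type*}

/-- `G` is a complete multipartite graph: there is an equivalence relation (whose classes are
the parts `V₁, …, Vₘ`, independent sets) such that two vertices are adjacent iff they are
inequivalent. -/
def IsCompleteMultipartite' (G : SimpleGraph V) : Prop :=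
  ∃ r : Setoid V, ∀ u v : V, G.Adj u v ↔ ¬ r.r u v

structure IsRk {α : Type*} [DecidableEq α] (r : Finset α → ℤ) : Prop where
  empty : r ∅ = 0
  mono : ∀ A B, A ⊆ B → r A ≤ r B
  sub : ∀ A B, r (A ∪ B) + r (A ∩ B) ≤ r A + r B
  unit : ∀ e A, r (insert e A) ≤ r A + 1

lemma IsRk.nonneg {α : Type*} [DecidableEq α] {r : Finset α → ℤ} (h : IsRk r) (A) : 0 ≤ r A := by
  rw [← h.empty]; exact h.mono _ _ (by simp)

lemma IsRk.contract {α : Type*} [DecidableEq α] {r : Finset α → ℤ} (h : IsRk r) (e : α)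
    (he : r {e} = 1) : IsRk (fun A => r (insert e A) - 1) where
  empty := by simp [he]
  mono A B hAB := by
    have := h.mono _ _ (Finset.insert_subset_insert e hAB)
    simpa using this
  sub A B := by
    have := h.sub (insert e A) (insert e B)
    rw [← Finset.insert_union_distrib, ← Finset.insert_inter_distrib] at this
    linarith
  unit x A := by
    have := h.unit x (insert e A)
    rw [Finset.insert_comm] at this
    linarith

lemma IsRk.loop {α : Type*} [DecidableEq α] {r : Finset α → ℤ} (h : IsRk r) (e : α)
    (he : r {e} ≠ 1) (A) : r (insert e A) ≤ r A := by
  have h1 := h.unit e ∅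
  have h2 := h.nonneg {e}
  have h3 := h.sub {e} A
  have h4 := h.nonneg ({e} ∩ A)
  have h5 := h.empty
  rw [← Finset.insert_eq] at h3
  simp only [insert_empty_eq] at h1
  have : r {e} = 0 := by omega
  omega

theorem matroid_inter {α : Type*} [DecidableEq α] (E : Finset α) :
    ∀ (r1 r2 : Finset α → ℤ) (k : ℤ), IsRk r1 → IsRk r2 →
      (∀ A ⊆ E, k ≤ r1 A + r2 (E \ A)) →
      ∃ I ⊆ E, k ≤ I.card ∧ r1 I = I.card ∧ r2 I = I.card := by
  induction E using Finset.induction_on with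
  | empty =>
    intro r1 r2 k h1 h2 h
    refine ⟨∅, by simp, ?_, by simp [h1.empty], by simp [h2.empty]⟩
    simpa [h1.empty, h2.empty] using h ∅ (by simp)
  | insert e S he ih =>
    intro r1 r2 k h1 h2 h
    by_cases hd : ∀ A ⊆ S, k ≤ r1 A + r2 (S \ A)
    · obtain ⟨I, hI, hh⟩ := ih r1 r2 k h1 h2 hd
      exact ⟨I, hI.trans (Finset.subset_insert _ _), hh⟩
    push Not at hd
    obtain ⟨A, hA, hAk⟩ := hd
    have heA : e ∉ A := fun h => he (hA h)
    have e1 : r1 {e} = 1 := by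
      by_contra hc
      have a := h1.loop e hc A
      have b := h (insert e A) (Finset.insert_subset_insert e hA)
      have : insert e S \ insert e A = S \ A := by grind
      rw [this] at b; linarith
    have e2 : r2 {e} = 1 := by
      by_contra hc
      have a := h2.loop e hc (S \ A)
      have b := h A (hA.trans (Finset.subset_insert _ _))
      have : insert e S \ A = insert e (S \ A) := by grind
      rw [this] at b; linarith
    by_cases hc : ∀ B ⊆ S, k - 1 ≤ (r1 (insert e B) - 1) + (r2 (insert e (S \ B)) - 1)
    · obtain ⟨I, hI, h3, h4, h5⟩ := ih _ _ (k-1) (h1.contract e e1) (h2.contract e e2) hc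
      have : e ∉ I := fun h => he (hI h)
      refine ⟨insert e I, Finset.insert_subset_insert e hI, ?_⟩
      rw [Finset.card_insert_of_notMem this]
      push_cast
      refine ⟨?_, ?_, ?_⟩ <;> linarith
    push Not at hc
    obtain ⟨B, hB, hBk⟩ := hc
    exfalso
    have heB : e ∉ B := fun h => he (hB h)
    have s1 := h1.sub A (insert e B)
    have s2 := h2.sub (S \ A) (insert e (S \ B))
    have t1 := h (A ∪ insert e B) (by grind)
    have t2 := h (A ∩ insert e B) (by grind)
    have q1 : insert e S \ (A ∪ insert e B) = S \ A ∩ insert e (S \ B) := by grind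
    have q2 : insert e S \ (A ∩ insert e B) = S \ A ∪ insert e (S \ B) := by grind
    rw [q1] at t1; rw [q2] at t2
    linarith

section lin
variable {W : Type*} [Fintype W] [DecidableEq W]

def evec : Sym2 W → (W → ZMod 2) :=
  Sym2.lift ⟨fun u v => Pi.single u 1 + Pi.single v 1, fun _ _ => add_comm _ _⟩

noncomputable def grk (A : Finset (Sym2 W)) : ℕ :=
  Module.finrank (ZMod 2) (Submodule.span (ZMod 2) (evec '' (A : Set (Sym2 W))))

lemma grk_le_card (A : Finset (Sym2 W)) : grk A ≤ A.card := by
  have := finrank_span_finset_le_card (R := ZMod 2) (A.image evec)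
  rw [Set.finrank, Finset.coe_image] at this
  exact this.trans Finset.card_image_le

lemma grk_mono {A B : Finset (Sym2 W)} (h : A ⊆ B) : grk A ≤ grk B :=
  Submodule.finrank_mono (Submodule.span_mono (Set.image_mono (by exact_mod_cast h)))

lemma grk_sub (A B : Finset (Sym2 W)) : grk (A ∪ B) + grk (A ∩ B) ≤ grk A + grk B := by
  have h := Submodule.finrank_sup_add_finrank_inf_eq
    (Submodule.span (ZMod 2) (evec '' (A : Set (Sym2 W))))
    (Submodule.span (ZMod 2) (evec '' (B : Set (Sym2 W))))
  rw [← Submodule.span_union, ← Set.image_union, ← Finset.coe_union] at h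
  have h2 : grk (A ∩ B) ≤ Module.finrank (ZMod 2)
      (Submodule.span (ZMod 2) (evec '' (A : Set (Sym2 W))) ⊓
        Submodule.span (ZMod 2) (evec '' (B : Set (Sym2 W))) : Submodule _ _) := by
    apply Submodule.finrank_mono
    apply le_inf <;> apply Submodule.span_mono <;> apply Set.image_mono <;> simp
  unfold grk at *
  omega

lemma grk_empty : grk (∅ : Finset (Sym2 W)) = 0 := by
  have := grk_le_card (∅ : Finset (Sym2 W))
  simpa using this

lemma grk_isRk : IsRk (fun A : Finset (Sym2 W) => (grk A : ℤ)) where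
  empty := by simp [grk_empty]
  mono A B h := by exact_mod_cast grk_mono h
  sub A B := by exact_mod_cast grk_sub A B
  unit e A := by
    have h1 := grk_sub {e} A
    have h2 := grk_le_card ({e} : Finset (Sym2 W))
    rw [← Finset.insert_eq] at h1
    simp only [Finset.card_singleton] at h2
    omega

lemma pi_add_self {U : Type*} (x : U → ZMod 2) : x + x = 0 := by
  funext i; exact CharTwo.add_self_eq_zero _

lemma single_mem {W : Type*} [DecidableEq W] {A : Set (Sym2 W)} {u v : W} (h : (SimpleGraph.fromEdgeSet A).Reachable u v) :
    (Pi.single u 1 + Pi.single v 1 : W → ZMod 2) ∈ Submodule.span (ZMod 2) (evec '' A) := by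
  obtain ⟨p⟩ := h
  induction p with
  | nil => rw [pi_add_self]; exact zero_mem _
  | @cons u v w huv p ih =>
    have h1 : (Pi.single u 1 + Pi.single v 1 : W → ZMod 2) ∈
        Submodule.span (ZMod 2) (evec '' A) := by
      apply Submodule.subset_span
      rw [SimpleGraph.fromEdgeSet_adj] at huv
      exact ⟨s(u,v), huv.1, rfl⟩
    have h2 := add_mem h1 ih
    have : (Pi.single u 1 + Pi.single v 1 + (Pi.single v 1 + Pi.single w 1) : W → ZMod 2)
        = Pi.single u 1 + Pi.single w 1 := by
      rw [add_assoc, ← add_assoc (Pi.single v 1 : W → ZMod 2), pi_add_self, zero_add]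
    rwa [this] at h2

lemma acyclic_of_grk (A : Finset (Sym2 W)) (h : grk A = A.card) :
    (SimpleGraph.fromEdgeSet (A : Set (Sym2 W))).IsAcyclic := by
  rw [SimpleGraph.isAcyclic_iff_forall_isBridge]
  intro e he
  induction e with | _ u v
  rw [SimpleGraph.isBridge_iff]
  refine fun hr => ?_
  have heA : s(u,v) ∈ A := by
    simp [SimpleGraph.edgeSet_fromEdgeSet] at he
    exact_mod_cast he.1
  have hr' : (SimpleGraph.fromEdgeSet ((A.erase s(u,v) : Finset _) : Set (Sym2 W))).Reachable u v := by
    refine hr.mono ?_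
    intro a b hab
    simp at hab ⊢
    tauto
  have hm := single_mem hr'
  have h1 : grk A ≤ grk (A.erase s(u,v)) := by
    unfold grk
    apply Submodule.finrank_mono
    rw [Submodule.span_le]
    rintro _ ⟨f, hf, rfl⟩
    by_cases hfe : f = s(u,v)
    · subst hfe; exact hm
    · apply Submodule.subset_span
      exact ⟨f, by simpa [hfe] using hf, rfl⟩
  have h2 := grk_le_card (A.erase s(u,v))
  have h3 := Finset.card_erase_lt_of_mem heA
  omega

lemma grk_ge (A : Finset (Sym2 W)) (H : SimpleGraph W)
    (hH : H = SimpleGraph.fromEdgeSet (A : Set (Sym2 W))) [Fintype H.ConnectedComponent] :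
    Fintype.card W ≤ grk A + Fintype.card H.ConnectedComponent := by
  let f : H.ConnectedComponent → (W → ZMod 2) := fun c => Pi.single c.out 1
  have htop : Submodule.span (ZMod 2) (evec '' (A : Set (Sym2 W))) ⊔
      Submodule.span (ZMod 2) (Set.range f) = ⊤ := by
    rw [eq_top_iff, ← (Pi.basisFun (ZMod 2) W).span_eq, Submodule.span_le]
    rintro _ ⟨w, rfl⟩
    have hr : H.Reachable w (H.connectedComponentMk w).out := by
      rw [← SimpleGraph.ConnectedComponent.eq]
      exact (Quot.out_eq _).symm
    have h1 := single_mem (A := (A : Set (Sym2 W))) (u := w)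
      (v := (H.connectedComponentMk w).out) (by rw [← hH]; exact hr)
    have h2 : f (H.connectedComponentMk w) ∈ Submodule.span (ZMod 2) (Set.range f) :=
      Submodule.subset_span ⟨_, rfl⟩
    have h3 := add_mem (Submodule.mem_sup_left (T := Submodule.span (ZMod 2) (Set.range f)) h1)
      (Submodule.mem_sup_right h2)
    rw [add_assoc, show f (H.connectedComponentMk w) = Pi.single (H.connectedComponentMk w).out 1 from rfl,
      pi_add_self, add_zero] at h3
    simpa using h3
  have h1 := Submodule.finrank_add_le_finrank_add_finrank
    (Submodule.span (ZMod 2) (evec '' (A : Set (Sym2 W)))) (Submodule.span (ZMod 2) (Set.range f))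
  rw [htop, finrank_top, Module.finrank_fintype_fun_eq_card] at h1
  have h2 := finrank_range_le_card (R := ZMod 2) f
  unfold Set.finrank at h2
  unfold grk
  omega

end lin

section graph
open Classical

lemma acyc_card {W : Type*} [Fintype W] [Nonempty W] (G : SimpleGraph W) (S : Set (Sym2 W))
    (hS : S ⊆ G.edgeSet) (h : (SimpleGraph.fromEdgeSet S).IsAcyclic) :
    S.ncard + 1 ≤ Fintype.card W := by
  obtain ⟨T, hle, -, hT⟩ : ∃ T, SimpleGraph.fromEdgeSet S ≤ T ∧ T ≤ ⊤ ∧ T.IsTree := by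
    have := (SimpleGraph.connected_top (V := W)).exists_isTree_le_of_le_of_isAcyclic le_top h
    obtain ⟨T, h⟩ := this
    exact ⟨T, by tauto⟩
  have h1 := (SimpleGraph.isTree_iff_connected_and_card.1 hT).2
  rw [Nat.card_eq_fintype_card (α := W), Nat.card_coe_set_eq] at h1
  rw [← h1]
  gcongr
  · exact Set.toFinite _
  · rw [← SimpleGraph.edgeSet_subset_edgeSet, SimpleGraph.edgeSet_fromEdgeSet] at hle
    intro e he
    exact hle ⟨he, fun hd => G.not_isDiag_of_mem_edgeSet (hS he) hd⟩

lemma lower {W : Type*} [Fintype W] [Nonempty W] (G : SimpleGraph W) (n t : ℕ)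
    (F : Fin t → Set (Sym2 W))
    (hF : ∀ i, F i ⊆ G.edgeSet ∧ (SimpleGraph.fromEdgeSet (F i)).IsAcyclic)
    (hc : ∀ e ∈ G.edgeSet, n ≤ {i : Fin t | e ∈ F i}.ncard) :
    n * G.edgeSet.ncard ≤ t * (Fintype.card W - 1) := by
  have h := Finset.sum_card_bipartiteAbove_eq_sum_card_bipartiteBelow
    (s := G.edgeFinset) (t := (Finset.univ : Finset (Fin t))) (fun e i => e ∈ F i)
  have h1 : n * G.edgeSet.ncard ≤
      ∑ e ∈ G.edgeFinset, (Finset.bipartiteAbove (fun e i => e ∈ F i) Finset.univ e).card := by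
    rw [mul_comm, ← smul_eq_mul, Set.ncard_eq_toFinset_card']
    apply Finset.card_nsmul_le_sum
    intro e he
    have := hc e (by simpa using he)
    rw [Set.ncard_eq_toFinset_card'] at this
    refine this.trans (Finset.card_le_card ?_)
    intro i; simp [Finset.bipartiteAbove]
  rw [h] at h1
  refine h1.trans ?_
  have : ∀ i ∈ (Finset.univ : Finset (Fin t)),
      (Finset.bipartiteBelow (fun e i => e ∈ F i) G.edgeFinset i).card ≤ Fintype.card W - 1 := by
    intro i _
    have := acyc_card G (F i) (hF i).1 (hF i).2
    rw [Set.ncard_eq_toFinset_card'] at this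
    refine le_trans (Finset.card_le_card ?_) (Nat.le_sub_one_of_lt this)
    intro e; simp [Finset.bipartiteBelow]
  simpa using Finset.sum_le_card_nsmul _ _ _ this

noncomputable def ee {W : Type*} [Fintype W] (G : SimpleGraph W) (X : Finset W) : Finset (Sym2 W) :=
  G.edgeFinset.filter (fun e => ∀ x ∈ e, x ∈ X)

lemma ee_insert {W : Type*} [Fintype W] (G : SimpleGraph W) (X : Finset W) (v : W) (hv : v ∉ X) :
    (ee G X).card + (X.filter (G.Adj v)).card ≤ (ee G (insert v X)).card := by
  rw [← Finset.card_image_of_injective (X.filter (G.Adj v)) (f := fun w => s(v, w))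
    (fun a b h => by simp at h; grind), ← Finset.card_union_of_disjoint]
  · apply Finset.card_le_card
    intro e
    induction e with | _ a b
    simp [ee]
    grind [G.adj_comm]
  · rw [Finset.disjoint_left]
    intro e he h
    simp [ee] at he h
    obtain ⟨w, hw, rfl⟩ := h
    exact hv (he.2 v (by simp))

lemma ee_le {W : Type*} [Fintype W] (G : SimpleGraph W) (hm : IsCompleteMultipartite' G)
    (X : Finset W) (v : W) :
    (ee G X).card ≤ (X.filter (G.Adj v)).card * (X.card - 1) := by
  obtain ⟨r, hr⟩ := hm
  refine le_trans (Finset.card_le_card (t := (X.filter (G.Adj v)).biUnion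
    (fun u => (X.erase u).image (fun w => s(u, w)))) ?_) (Finset.card_biUnion_le_card_mul _ _ _ ?_)
  · intro e
    induction e with | _ a b
    simp only [ee, Finset.mem_filter, SimpleGraph.mem_edgeFinset, SimpleGraph.mem_edgeSet,
      Finset.mem_biUnion, Finset.mem_image, Finset.mem_erase]
    rintro ⟨hab, hX⟩
    have ha := hX a (by simp)
    have hb := hX b (by simp)
    by_cases h : G.Adj v a
    · exact ⟨a, ⟨ha, h⟩, b, ⟨hab.ne', hb⟩, rfl⟩
    · refine ⟨b, ⟨hb, ?_⟩, a, ⟨hab.ne, ha⟩, Sym2.eq_swap⟩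
      rw [hr] at h hab ⊢
      rw [not_not] at h
      exact fun h' => hab (r.trans (r.symm h) h')
  · intro u hu
    refine Finset.card_image_le.trans ?_
    rw [Finset.card_erase_of_mem (Finset.mem_filter.1 hu).1]

lemma ee_single {W : Type*} [Fintype W] (G : SimpleGraph W) (X : Finset W) (h : X.card ≤ 1) :
    (ee G X).card = 0 := by
  rw [Finset.card_eq_zero, Finset.eq_empty_iff_forall_notMem]
  intro e
  induction e with | _ a b
  simp only [ee, Finset.mem_filter, SimpleGraph.mem_edgeFinset, SimpleGraph.mem_edgeSet]
  rintro ⟨hab, hX⟩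
  exact hab.ne (Finset.card_le_one.1 h a (hX a (by simp)) b (hX b (by simp)))

lemma density {W : Type*} [Fintype W] (G : SimpleGraph W) (hm : IsCompleteMultipartite' G)
    (X : Finset W) (hX : X.Nonempty) (D : Finset W) (hD : Disjoint X D) :
    (ee G X).card * ((X ∪ D).card - 1) ≤ (ee G (X ∪ D)).card * (X.card - 1) := by
  induction D using Finset.induction_on with
  | empty => simp
  | insert v D hv ih =>
    rw [Finset.disjoint_insert_right] at hD
    have ih := ih hD.2
    have hvY : v ∉ X ∪ D := by simp [hv, hD.1]
    rw [Finset.union_insert, Finset.card_insert_of_notMem hvY]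
    have h1 := ee_insert G _ v hvY
    have h2 := ee_le G hm (X ∪ D) v
    have hc : X.card ≤ (X ∪ D).card := Finset.card_le_card Finset.subset_union_left
    have hp := hX.card_pos
    by_cases h1X : (X ∪ D).card ≤ 1
    · rw [ee_single G X (by omega)]; simp
    obtain ⟨y, hy⟩ : ∃ y, (X ∪ D).card = y + 2 := ⟨(X ∪ D).card - 2, by omega⟩
    rw [hy] at ih h2 ⊢
    generalize (ee G X).card = a at *
    generalize X.card - 1 = x at *
    generalize (ee G (X ∪ D)).card = b at *
    generalize (ee G (insert v (X ∪ D))).card = c at *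
    generalize ((X ∪ D).filter (G.Adj v)).card = d at *
    simp only [Nat.add_sub_cancel, show y + 2 - 1 = y + 1 from rfl] at *
    have : (y+1) * (a * (y+2)) ≤ (y+1) * (c * x) := by
      calc (y+1) * (a * (y+2)) = (a * (y+1)) * (y+2) := by ring
        _ ≤ (b * x) * (y+2) := by gcongr
        _ = (b * (y+1) + b) * x := by ring
        _ ≤ (b * (y+1) + d * (y+1)) * x := by gcongr
        _ = (y+1) * ((b+d) * x) := by ring
        _ ≤ _ := by gcongr
    exact Nat.le_of_mul_le_mul_left this (by omega)

lemma rank_cond {W : Type*} [Fintype W] (G : SimpleGraph W) (n t : ℕ)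
    (hden : ∀ X : Finset W, X.Nonempty → n * (ee G X).card ≤ t * (X.card - 1))
    (A : Finset (Sym2 W)) (hA : A ⊆ G.edgeFinset) : n * A.card ≤ t * grk A := by
  obtain ⟨H, hH⟩ : ∃ H, H = SimpleGraph.fromEdgeSet (A : Set (Sym2 W)) := ⟨_, rfl⟩
  have hg := grk_ge A H hH
  let X : H.ConnectedComponent → Finset W := fun c =>
    Finset.univ.filter (fun w => H.connectedComponentMk w = c)
  have hXne : ∀ c, (X c).Nonempty := by
    intro c
    induction c using SimpleGraph.ConnectedComponent.ind with | _ v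
    exact ⟨v, by simp [X]⟩
  have hV : Fintype.card W = ∑ c, (X c).card := by
    rw [← Finset.card_univ]
    exact Finset.card_eq_sum_card_fiberwise (by simp)
  have h1 : A.card ≤ ∑ c, (ee G (X c)).card := by
    refine le_trans (Finset.card_le_card ?_) Finset.card_biUnion_le
    intro e he
    have heG := hA he
    induction e with | _ a b
    simp only [Finset.mem_biUnion, ee, Finset.mem_filter]
    refine ⟨H.connectedComponentMk a, Finset.mem_univ _, heG, ?_⟩
    have hab : H.Adj a b := by
      rw [hH, SimpleGraph.fromEdgeSet_adj]
      exact ⟨he, (by simpa using heG : G.Adj a b).ne⟩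
    intro x hx
    rw [Sym2.mem_iff] at hx
    rcases hx with rfl | rfl
    · simp [X]
    · simpa [X] using hab.symm.reachable
  have h2 : ∑ c, ((X c).card - 1) + Fintype.card H.ConnectedComponent = Fintype.card W := by
    rw [hV, ← Finset.card_univ, Finset.card_eq_sum_ones, ← Finset.sum_add_distrib]
    refine Finset.sum_congr rfl fun c _ => ?_
    have := (hXne c).card_pos
    omega
  calc n * A.card ≤ n * ∑ c, (ee G (X c)).card := by gcongr
    _ = ∑ c, n * (ee G (X c)).card := by rw [Finset.mul_sum]
    _ ≤ ∑ c, t * ((X c).card - 1) := Finset.sum_le_sum fun c _ => hden _ (hXne c)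
    _ = t * ∑ c, ((X c).card - 1) := by rw [Finset.mul_sum]
    _ ≤ t * grk A := by gcongr; omega

noncomputable def pr {W : Type*} {n t : ℕ} (i : Fin t) (A : Finset (Sym2 W × Fin n × Fin t)) :
    Finset (Sym2 W) := (A.filter (fun x => x.2.2 = i)).image (fun x => x.1)

lemma mem_pr {W : Type*} {n t : ℕ} (i : Fin t) (A : Finset (Sym2 W × Fin n × Fin t)) (e) :
    e ∈ pr i A ↔ ∃ j, (e, j, i) ∈ A := by
  simp [pr]

lemma rk1 {W : Type*} [Fintype W] (n t : ℕ) :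
    IsRk (fun A : Finset (Sym2 W × Fin n × Fin t) => ∑ i, (grk (pr i A) : ℤ)) where
  empty := by simp [pr, grk_empty]
  mono A B h := by
    refine Finset.sum_le_sum fun i _ => grk_isRk.mono _ _ ?_
    intro e; simp only [mem_pr]; rintro ⟨j, hj⟩; exact ⟨j, h hj⟩
  sub A B := by
    rw [← Finset.sum_add_distrib, ← Finset.sum_add_distrib]
    refine Finset.sum_le_sum fun i _ => le_trans ?_ (grk_isRk.sub (pr i A) (pr i B))
    refine add_le_add (grk_isRk.mono _ _ ?_) (grk_isRk.mono _ _ ?_)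
    · intro e; simp only [mem_pr, Finset.mem_union]; grind
    · intro e; simp only [mem_pr, Finset.mem_inter]; grind
  unit x A := by
    have : ∀ i ∈ Finset.univ, (grk (pr i (insert x A)) : ℤ) ≤
        grk (pr i A) + if i = x.2.2 then 1 else 0 := by
      intro i _
      split_ifs with h
      · refine le_trans (grk_isRk.mono _ (insert x.1 (pr i A)) ?_) (grk_isRk.unit _ _)
        intro e; simp only [mem_pr, Finset.mem_insert]; grind
      · rw [add_zero]
        refine grk_isRk.mono _ _ ?_
        intro e; simp only [mem_pr, Finset.mem_insert]; grind
    refine (Finset.sum_le_sum this).trans ?_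
    rw [Finset.sum_add_distrib]
    simp

lemma rk2 {α β : Type*} [DecidableEq α] [DecidableEq β] (f : α → β) :
    IsRk (fun A : Finset α => ((A.image f).card : ℤ)) where
  empty := by simp
  mono A B h := by exact_mod_cast Finset.card_le_card (Finset.image_subset_image h)
  sub A B := by
    have h1 := Finset.card_union_add_card_inter (A.image f) (B.image f)
    have h2 := Finset.card_le_card (Finset.image_inter_subset f A B)
    rw [Finset.image_union]
    omega
  unit x A := by
    rw [Finset.image_insert]
    exact_mod_cast Finset.card_insert_le _ _

lemma upper {W : Type*} [Fintype W] (G : SimpleGraph W) (n t : ℕ)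
    (hden : ∀ X : Finset W, X.Nonempty → n * (ee G X).card ≤ t * (X.card - 1)) :
    ∃ F : Fin t → Set (Sym2 W),
        (∀ i, F i ⊆ G.edgeSet ∧ (SimpleGraph.fromEdgeSet (F i)).IsAcyclic) ∧
        (∀ e ∈ G.edgeSet, n ≤ {i : Fin t | e ∈ F i}.ncard) := by
  let p : Sym2 W × Fin n × Fin t → Sym2 W × Fin n := fun x => (x.1, x.2.1)
  let P : Finset (Sym2 W × Fin n) := G.edgeFinset ×ˢ Finset.univ
  let E : Finset (Sym2 W × Fin n × Fin t) := G.edgeFinset ×ˢ Finset.univ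
  have key : ∀ A ⊆ E, (P.card : ℤ) ≤ ∑ i, (grk (pr i A) : ℤ) + ((E \ A).image p).card := by
    intro A hA
    let B := P.filter (fun x => ∀ i, (x.1, x.2, i) ∈ A)
    have hB : P ⊆ B ∪ (E \ A).image p := by
      intro x hx
      by_cases h : ∀ i, (x.1, x.2, i) ∈ A
      · exact Finset.mem_union_left _ (Finset.mem_filter.2 ⟨hx, h⟩)
      · push Not at h
        obtain ⟨i, hi⟩ := h
        refine Finset.mem_union_right _ (Finset.mem_image.2 ⟨(x.1, x.2, i), ?_, rfl⟩)
        simp only [Finset.mem_sdiff, hi, not_false_eq_true, and_true, E, Finset.mem_product,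
          Finset.mem_univ]
        exact (Finset.mem_product.1 hx).1
    have h1 := (Finset.card_le_card hB).trans (Finset.card_union_le _ _)
    let C := B.image Prod.fst
    have hC : C ⊆ G.edgeFinset := by
      intro e he
      obtain ⟨x, hx, rfl⟩ := Finset.mem_image.1 he
      exact (Finset.mem_product.1 (Finset.mem_filter.1 hx).1).1
    have h2 : B.card ≤ n * C.card := by
      have : B ⊆ C ×ˢ Finset.univ := by
        intro x hx
        exact Finset.mem_product.2 ⟨Finset.mem_image_of_mem _ hx, Finset.mem_univ _⟩
      have := Finset.card_le_card this
      rw [Finset.card_product] at this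
      simpa [mul_comm] using this
    have h3 := rank_cond G n t hden C hC
    have h4 : t * grk C ≤ ∑ i, grk (pr i A) := by
      have : ∀ i ∈ (Finset.univ : Finset (Fin t)), grk C ≤ grk (pr i A) := by
        intro i _
        apply grk_mono
        intro e he
        obtain ⟨x, hx, rfl⟩ := Finset.mem_image.1 he
        exact (mem_pr _ _ _).2 ⟨x.2, (Finset.mem_filter.1 hx).2 i⟩
      simpa using Finset.card_nsmul_le_sum _ _ _ this
    have h5 : P.card ≤ ∑ i, grk (pr i A) + ((E \ A).image p).card := by omega
    exact_mod_cast h5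
  obtain ⟨I, hIE, hk, hr1, hr2⟩ := matroid_inter E _ (fun A => ((A.image p).card : ℤ)) _ (rk1 n t) (rk2 p) key
  have hr1 : ∑ i, grk (pr i I) = I.card := by exact_mod_cast hr1
  have hr2 : (I.image p).card = I.card := by exact_mod_cast hr2
  have hk : P.card ≤ I.card := by exact_mod_cast hk
  have hI : I.card = ∑ i, (I.filter (fun x => x.2.2 = i)).card :=
    Finset.card_eq_sum_card_fiberwise (by simp)
  have hle1 : ∀ i, grk (pr i I) ≤ (pr i I).card := fun i => grk_le_card _
  have hle2 : ∀ i, (pr i I).card ≤ (I.filter (fun x => x.2.2 = i)).card :=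
    fun i => Finset.card_image_le
  have heq := (Finset.sum_eq_sum_iff_of_le (fun i _ => (hle1 i).trans (hle2 i))).1 (hr1.trans hI)
  refine ⟨fun i => (pr i I : Set (Sym2 W)), fun i => ⟨?_, ?_⟩, ?_⟩
  · intro e he
    obtain ⟨j, hj⟩ := (mem_pr _ _ _).1 (Finset.mem_coe.1 he)
    have := (Finset.mem_product.1 (hIE hj)).1
    simpa using this
  · apply acyclic_of_grk
    have := heq i (Finset.mem_univ _)
    have := hle1 i
    have := hle2 i
    omega
  · intro e he
    have hPI : I.image p = P := by
      apply Finset.eq_of_subset_of_card_le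
      · intro x hx
        obtain ⟨y, hy, rfl⟩ := Finset.mem_image.1 hx
        exact Finset.mem_product.2 ⟨(Finset.mem_product.1 (hIE hy)).1, Finset.mem_univ _⟩
      · omega
    have hex : ∀ j : Fin n, ∃ i, (e, j, i) ∈ I := by
      intro j
      have : (e, j) ∈ I.image p := by
        rw [hPI]; exact Finset.mem_product.2 ⟨by simpa using he, Finset.mem_univ _⟩
      obtain ⟨⟨e', j', i⟩, hy, h⟩ := Finset.mem_image.1 this
      simp only [p, Prod.mk.injEq] at h
      obtain ⟨rfl, rfl⟩ := h
      exact ⟨i, hy⟩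
    choose g hg using hex
    have hinj : Function.Injective g := by
      intro j j' hjj
      have hc : (pr (g j) I).card = (I.filter (fun x => x.2.2 = g j)).card := by
        have := heq (g j) (Finset.mem_univ _)
        have := hle1 (g j)
        have := hle2 (g j)
        omega
      have hinjOn := Finset.card_image_iff.1 hc
      have := @hinjOn (e, j, g j) (by simp [hg]) (e, j', g j) (by
        have := hg j'
        rw [← hjj] at this
        simp [this]) rfl
      simpa using this
    rw [Set.ncard_eq_toFinset_card']
    have := Finset.card_le_card_of_injOn (s := (Finset.univ : Finset (Fin n)))
      (t := {i : Fin t | e ∈ (pr i I : Set (Sym2 W))}.toFinset) g (by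
        intro j _
        simp [mem_pr]
        exact ⟨j, hg j⟩) hinj.injOn
    simpa using this

end graph

/-- For a complete multipartite graph `Γ` and `n ≥ 1`, the minimum number of forests covering
the edges of the multigraph `n∗Γ` (each edge of `Γ` taken with multiplicity `n`; equivalently,
forests in `Γ` covering every edge at least `n` times) equals `⌈n·|E(Γ)|/(|V(Γ)|−1)⌉`. -/
theorem forest_cover_multigraph_completeMultipartite [Fintype V] (G : SimpleGraph V)
    (n : ℕ) (hn : 1 ≤ n) (hmul : IsCompleteMultipartite' G) :
    sInf {t : ℕ | ∃ F : Fin t → Set (Sym2 V),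
        (∀ i, F i ⊆ G.edgeSet ∧ (SimpleGraph.fromEdgeSet (F i)).IsAcyclic) ∧
        (∀ e ∈ G.edgeSet, n ≤ {i : Fin t | e ∈ F i}.ncard)} =
      ⌈((n * G.edgeSet.ncard : ℕ) : ℚ) / ((Fintype.card V : ℚ) - 1)⌉₊ := by
  classical
  have hee : G.edgeSet.ncard = (ee G Finset.univ).card := by
    rw [Set.ncard_eq_toFinset_card']
    congr 1
    ext e
    simp [ee]
  set t := ⌈((n * G.edgeSet.ncard : ℕ) : ℚ) / ((Fintype.card V : ℚ) - 1)⌉₊ with ht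
  have hden : ∀ X : Finset V, X.Nonempty → n * (ee G X).card ≤ t * (X.card - 1) := by
    intro X hX
    by_cases hc : Fintype.card V ≤ 1
    · rw [ee_single G X ((Finset.card_le_univ X).trans hc)]; simp
    have hpos : (0 : ℚ) < (Fintype.card V : ℚ) - 1 := by
      have : (1 : ℚ) < Fintype.card V := by exact_mod_cast (not_le.1 hc)
      linarith
    have h1 := Nat.le_ceil (((n * G.edgeSet.ncard : ℕ) : ℚ) / ((Fintype.card V : ℚ) - 1))
    rw [← ht, div_le_iff₀ hpos] at h1
    have h2 : n * G.edgeSet.ncard ≤ t * (Fintype.card V - 1) := by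
      rw [← Nat.cast_le (α := ℚ)]
      rw [Nat.cast_mul t, Nat.cast_sub (by omega)]
      exact_mod_cast h1
    have h3 := density G hmul X hX Xᶜ disjoint_compl_right
    rw [Finset.union_compl, Finset.card_univ, ← hee] at h3
    have h4 : (Fintype.card V - 1) * (n * (ee G X).card) ≤
        (Fintype.card V - 1) * (t * (X.card - 1)) := by
      calc (Fintype.card V - 1) * (n * (ee G X).card)
          = n * ((ee G X).card * (Fintype.card V - 1)) := by ring
        _ ≤ n * (G.edgeSet.ncard * (X.card - 1)) := by gcongr
        _ = (n * G.edgeSet.ncard) * (X.card - 1) := by ring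
        _ ≤ (t * (Fintype.card V - 1)) * (X.card - 1) := by gcongr
        _ = _ := by ring
    exact Nat.le_of_mul_le_mul_left h4 (by omega)
  have hmem := upper G n t hden
  apply le_antisymm
  · exact Nat.sInf_le hmem
  · refine le_csInf ⟨t, hmem⟩ ?_
    rintro s ⟨F, hF, hcov⟩
    by_cases hc : Fintype.card V ≤ 1
    · have : G.edgeSet.ncard = 0 := by
        rw [hee]; exact ee_single G _ (by simpa using hc)
      rw [ht, this]; simp
    have hpos : (0 : ℚ) < (Fintype.card V : ℚ) - 1 := by
      have : (1 : ℚ) < Fintype.card V := by exact_mod_cast (not_le.1 hc)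
      linarith
    have : Nonempty V := Fintype.card_pos_iff.1 (by omega)
    have h := lower G n s F hF hcov
    rw [ht, Nat.ceil_le, div_le_iff₀ hpos]
    have h' : ((n * G.edgeSet.ncard : ℕ) : ℚ) ≤ ((s * (Fintype.card V - 1) : ℕ) : ℚ) := by
      exact_mod_cast h
    rw [Nat.cast_mul s, Nat.cast_sub (by omega)] at h'
    simpa using h'
end

section
/- For all m, n ≥ 3, 5 ≤ pmd(C_m □ C_n) ≤ 6, where C_k denotes the cycle on k vertices. -/
open SimpleGraph

variable {V : Type*}

/-- A positive matching in a simple graph: a set `M` of pairwise disjoint edges of `G` together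
with a vertex weighting `w` such that an edge `uv` of `G` satisfies `w u + w v > 0` iff the edge
belongs to `M`. -/
def IsPositiveMatching (G : SimpleGraph V) (M : Set (Sym2 V)) : Prop :=
  M ⊆ G.edgeSet ∧
  (∀ e ∈ M, ∀ f ∈ M, e ≠ f → ∀ v : V, v ∈ e → v ∉ f) ∧
  ∃ w : V → ℝ, ∀ u v : V, G.Adj u v → (0 < w u + w v ↔ s(u, v) ∈ M)

/-- A positive matching decomposition of `G` with parts `E 0, …, E (p-1)`: an ordered partition
of the edge set of `G` such that each part is a positive matching of `G` minus the earlier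
parts. -/
def IsPMD (G : SimpleGraph V) {p : ℕ} (E : Fin p → Set (Sym2 V)) : Prop :=
  (∀ i j : Fin p, i ≠ j → Disjoint (E i) (E j)) ∧
  (⋃ i, E i) = G.edgeSet ∧
  ∀ i : Fin p, IsPositiveMatching (G.deleteEdges (⋃ j : Fin p, ⋃ (_ : j < i), E j)) (E i)

/-- The minimum number of parts in a positive matching decomposition of `G`. -/
noncomputable def pmd (G : SimpleGraph V) : ℕ :=
  sInf {p : ℕ | ∃ E : Fin p → Set (Sym2 V), IsPMD G E}

/-- Edge `uv` becomes positive for the first time at stage `k`. -/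
def FirstAt {X : Type*} {p : ℕ} (w : Fin p → X → ℤ) (k : Fin p) (u v : X) : Prop :=
  0 < w k u + w k v ∧ ∀ j < k, w j u + w j v ≤ 0

instance {X : Type*} {p : ℕ} (w : Fin p → X → ℤ) (k : Fin p) (u v : X) :
    Decidable (FirstAt w k u v) := by unfold FirstAt; infer_instance

lemma FirstAt.symm {X : Type*} {p : ℕ} {w : Fin p → X → ℤ} {k : Fin p} {u v : X}
    (h : FirstAt w k u v) : FirstAt w k v u := by
  refine ⟨by have := h.1; omega, fun j hj => ?_⟩
  have := h.2 j hj
  omega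

lemma FirstAt.unique {X : Type*} {p : ℕ} {w : Fin p → X → ℤ} {k l : Fin p} {u v : X}
    (h : FirstAt w k u v) (h' : FirstAt w l u v) : k = l := by
  rcases lt_trichotomy k l with hl | hl | hl
  · have := h'.2 k hl
    have := h.1
    omega
  · exact hl
  · have := h.2 l hl
    have := h'.1
    omega

lemma exists_firstAt {X : Type*} {p : ℕ} (w : Fin p → X → ℤ) (u v : X) (k : Fin p)
    (hk : 0 < w k u + w k v) : ∃ l, l ≤ k ∧ FirstAt w l u v := by
  induction k using WellFoundedLT.induction with
  | ind k ih =>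
    by_cases h : ∀ j < k, w j u + w j v ≤ 0
    · exact ⟨k, le_rfl, hk, h⟩
    · push Not at h
      obtain ⟨j, hj, hj'⟩ := h
      obtain ⟨l, hl, hl'⟩ := ih j hj hj'
      exact ⟨l, hl.trans hj.le, hl'⟩

/-- The parts defined by a sequence of integer weightings. -/
def parts {X : Type*} (G : SimpleGraph X) {p : ℕ} (w : Fin p → X → ℤ) (k : Fin p) :
    Set (Sym2 X) :=
  {e | ∃ u v, e = s(u, v) ∧ G.Adj u v ∧ FirstAt w k u v}

lemma mem_parts {X : Type*} (G : SimpleGraph X) {p : ℕ} (w : Fin p → X → ℤ) (k : Fin p)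
    (u v : X) : s(u, v) ∈ parts G w k ↔ G.Adj u v ∧ FirstAt w k u v := by
  constructor
  · rintro ⟨a, b, hab, h1, h2⟩
    rcases Sym2.eq_iff.1 hab with ⟨rfl, rfl⟩ | ⟨rfl, rfl⟩
    · exact ⟨h1, h2⟩
    · exact ⟨h1.symm, h2.symm⟩
  · rintro ⟨h1, h2⟩
    exact ⟨u, v, rfl, h1, h2⟩

lemma isPMD_parts {X : Type*} (G : SimpleGraph X) {p : ℕ} (w : Fin p → X → ℤ)
    (hcov : ∀ u v, G.Adj u v → ∃ k, 0 < w k u + w k v)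
    (hmat : ∀ k u v v', G.Adj u v → G.Adj u v' → FirstAt w k u v → FirstAt w k u v' → v = v') :
    IsPMD G (parts G w) := by
  refine ⟨?_, ?_, ?_⟩
  · intro i j hij
    rw [Set.disjoint_left]
    intro e
    induction e with
    | _ u v =>
      rw [mem_parts, mem_parts]
      rintro ⟨_, h⟩ ⟨_, h'⟩
      exact hij (h.unique h')
  · ext e
    induction e with
    | _ u v =>
      simp only [Set.mem_iUnion, mem_parts, SimpleGraph.mem_edgeSet]
      constructor
      · rintro ⟨_, h, _⟩
        exact h
      · intro h
        obtain ⟨k, hk⟩ := hcov u v h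
        obtain ⟨l, _, hl⟩ := exists_firstAt w u v k hk
        exact ⟨l, h, hl⟩
  · intro i
    refine ⟨?_, ?_, fun x => (w i x : ℝ), ?_⟩
    · intro e
      induction e with
      | _ u v =>
        simp only [mem_parts, SimpleGraph.mem_edgeSet, SimpleGraph.deleteEdges_adj,
          Set.mem_iUnion]
        rintro ⟨h1, h2⟩
        refine ⟨h1, ?_⟩
        rintro ⟨j, hj, _, h3⟩
        exact hj.ne (h3.unique h2)
    · intro e he f hf hef v hve hvf
      obtain ⟨a, rfl⟩ := Sym2.mem_iff_exists.1 hve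
      obtain ⟨b, rfl⟩ := Sym2.mem_iff_exists.1 hvf
      rw [mem_parts] at he hf
      exact hef (by rw [hmat i v a b he.1 hf.1 he.2 hf.2])
    · intro u v huv
      simp only [SimpleGraph.deleteEdges_adj, Set.mem_iUnion, mem_parts] at huv
      rw [mem_parts]
      have hc : (0 : ℝ) < (w i u : ℝ) + (w i v : ℝ) ↔ 0 < w i u + w i v := by
        exact_mod_cast Iff.rfl
      rw [hc]
      constructor
      · intro h
        refine ⟨huv.1, ?_⟩
        obtain ⟨l, hl, hl'⟩ := exists_firstAt w u v i h
        rcases hl.eq_or_lt with rfl | hlt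
        · exact hl'
        · exact (huv.2 ⟨l, hlt, huv.1, hl'⟩).elim
      · exact fun h => h.2.1

/-- Six weightings on pairs of symbols. -/
def tab : Fin 6 → Fin 5 → Fin 5 → ℤ :=
  ![
    ![![3, -3, -3, -3, -3], ![-3, -1, 0, 1, -2], ![-2, 1, 0, -1, 2], ![-1, -2, 0, 1, -3], ![-2, 2, -1, -1, 2]],
    ![![0, -2, 1, 0, -2], ![-3, 3, -3, 0, 1], ![2, -3, -1, 0, -1], ![-2, 2, -1, 0, 1], ![3, -3, -3, -3, -3]],
    ![![-3, 2, -3, 0, 1], ![2, -3, -1, 0, -1], ![-3, 3, 1, 0, -3], ![2, -2, -1, -1, -1], ![0, -1, 1, 0, -2]],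
    ![![2, -2, 1, -1, -1], ![-2, 2, -1, 1, 1], ![3, -3, 0, 0, 0], ![-3, 3, 0, 0, 0], ![-1, 1, 0, 1, 1]],
    ![![0, 1, -1, -1, -1], ![0, 1, 2, 2, 3], ![2, -1, -2, 0, 1], ![-2, 3, 3, 1, 0], ![0, -1, -3, 1, 1]],
    ![![3, 3, 3, 3, 3], ![3, 3, 3, 3, 0], ![3, 3, 3, 3, 3], ![3, 3, 3, 3, 3], ![2, 3, 3, 3, 0]]]

/-- The weightings on pairs. -/
def tw (k : Fin 6) (x : Fin 5 × Fin 5) : ℤ := tab k x.1 x.2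

/-- Allowed consecutive symbols: `0 → 1 → 2 → 3 → 4` and `2, 3, 4 → 0`. -/
def Stp (a b : Fin 5) : Prop := a.val + 1 = b.val ∨ (b.val = 0 ∧ 2 ≤ a.val)

instance (a b : Fin 5) : Decidable (Stp a b) := by unfold Stp; infer_instance

lemma tab_cov1 : ∀ a b c : Fin 5, Stp a b → ∃ k, 0 < tw k (a, c) + tw k (b, c) := by
  decide +kernel

lemma tab_cov2 : ∀ a b c : Fin 5, Stp a b → ∃ k, 0 < tw k (c, a) + tw k (c, b) := by
  decide +kernel

lemma tab_h : ∀ a b c : Fin 5, Stp a b → Stp b c → ∀ t k,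
    FirstAt tw k (b, t) (a, t) → ¬ FirstAt tw k (b, t) (c, t) := by
  decide +kernel

lemma tab_v : ∀ a b c : Fin 5, Stp a b → Stp b c → ∀ t k,
    FirstAt tw k (t, b) (t, a) → ¬ FirstAt tw k (t, b) (t, c) := by
  decide +kernel

lemma tab_hv : ∀ a b c d : Fin 5, (Stp a b ∨ Stp b a) → (Stp c d ∨ Stp d c) → ∀ k,
    FirstAt tw k (a, c) (b, c) → ¬ FirstAt tw k (a, c) (a, d) := by
  decide +kernel

/-- The symbol at position `i` of the cycle of length `m`. -/
def sym (m : ℕ) (i : Fin m) : Fin 5 :=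
  if h : i.val < 3 * (m / 3) then ⟨i.val % 3, by omega⟩
  else ⟨3 + (i.val - 3 * (m / 3)), by have := i.2; omega⟩

/-- Cyclic successor. -/
def Nx (m : ℕ) (u v : Fin m) : Prop := v.val = u.val + 1 ∨ (u.val + 1 = m ∧ v.val = 0)

lemma Nx.stp {m : ℕ} (hm : 3 ≤ m) {u v : Fin m} (h : Nx m u v) : Stp (sym m u) (sym m v) := by
  have hu := u.2
  have hv := v.2
  unfold Nx at h
  unfold Stp sym
  split_ifs <;> simp only <;> omega

lemma Nx.right_unique {m : ℕ} {u v v' : Fin m} (h : Nx m u v) (h' : Nx m u v') : v = v' := by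
  have hv := v.2
  have hv' := v'.2
  unfold Nx at h h'
  ext
  omega

lemma Nx.left_unique {m : ℕ} {u v v' : Fin m} (h : Nx m v u) (h' : Nx m v' u) : v = v' := by
  have hv := v.2
  have hv' := v'.2
  unfold Nx at h h'
  ext
  omega

lemma sub_val_one {m : ℕ} (hm : 3 ≤ m) (u v : Fin m) : (v - u).val = 1 ↔ Nx m u v := by
  have hu := u.2
  have hv := v.2
  unfold Nx
  rw [Fin.sub_def]
  simp only
  rcases le_or_gt u.val v.val with h | h
  · have : m - u.val + v.val = (v.val - u.val) + m := by omega
    rw [this, Nat.add_mod_right, Nat.mod_eq_of_lt (by omega)]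
    omega
  · rw [Nat.mod_eq_of_lt (by omega)]
    omega

lemma cyc_adj {m : ℕ} (hm : 3 ≤ m) (u v : Fin m) :
    (cycleGraph m).Adj u v ↔ Nx m u v ∨ Nx m v u := by
  rw [cycleGraph_adj', sub_val_one hm, sub_val_one hm, or_comm]

/-- The weightings on the torus. -/
def torW (m n : ℕ) (k : Fin 6) (x : Fin m × Fin n) : ℤ := tw k (sym m x.1, sym n x.2)

lemma firstAt_torW {m n : ℕ} {k : Fin 6} {x y : Fin m × Fin n} (h : FirstAt (torW m n) k x y) :
    FirstAt tw k (sym m x.1, sym n x.2) (sym m y.1, sym n y.2) := h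

lemma torus_pmd (m n : ℕ) (hm : 3 ≤ m) (hn : 3 ≤ n) :
    IsPMD (cycleGraph m □ cycleGraph n) (parts (cycleGraph m □ cycleGraph n) (torW m n)) := by
  apply isPMD_parts
  · rintro ⟨a, b⟩ ⟨c, d⟩ h
    rw [boxProd_adj, cyc_adj hm, cyc_adj hn] at h
    simp only at h
    rcases h with ⟨h | h, rfl⟩ | ⟨h | h, rfl⟩
    · exact tab_cov1 _ _ _ (h.stp hm)
    · obtain ⟨k, hk⟩ := tab_cov1 _ _ (sym n b) (h.stp hm)
      exact ⟨k, by rw [add_comm]; exact hk⟩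
    · exact tab_cov2 _ _ _ (h.stp hn)
    · obtain ⟨k, hk⟩ := tab_cov2 _ _ (sym m a) (h.stp hn)
      exact ⟨k, by rw [add_comm]; exact hk⟩
  · rintro k ⟨a, b⟩ ⟨c, d⟩ ⟨c', d'⟩ h h' f f'
    rw [boxProd_adj, cyc_adj hm, cyc_adj hn] at h h'
    simp only at h h'
    replace f := firstAt_torW f
    replace f' := firstAt_torW f'
    simp only at f f'
    rcases h with ⟨h, rfl⟩ | ⟨h, rfl⟩ <;> rcases h' with ⟨h', rfl⟩ | ⟨h', rfl⟩
    · rcases h with h | h <;> rcases h' with h' | h'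
      · rw [h.right_unique h']
      · exact (tab_h _ _ _ (h'.stp hm) (h.stp hm) _ _ f' f).elim
      · exact (tab_h _ _ _ (h.stp hm) (h'.stp hm) _ _ f f').elim
      · rw [h.left_unique h']
    · exact (tab_hv _ _ _ _ (h.imp (Nx.stp hm) (Nx.stp hm)) (h'.imp (Nx.stp hn) (Nx.stp hn))
        _ f f').elim
    · exact (tab_hv _ _ _ _ (h'.imp (Nx.stp hm) (Nx.stp hm)) (h.imp (Nx.stp hn) (Nx.stp hn))
        _ f' f).elim
    · rcases h with h | h <;> rcases h' with h' | h'
      · rw [h.right_unique h']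
      · exact (tab_v _ _ _ (h'.stp hn) (h.stp hn) _ _ f' f).elim
      · exact (tab_v _ _ _ (h.stp hn) (h'.stp hn) _ _ f f').elim
      · rw [h.left_unique h']

/-- Matching parts: two edges at one vertex lie in distinct parts. -/
lemma IsPMD.inj {X : Type*} {G : SimpleGraph X} {p : ℕ} {E : Fin p → Set (Sym2 X)}
    (hE : IsPMD G E) {i : Fin p} {u v v' : X} (h : s(u, v) ∈ E i) (h' : s(u, v') ∈ E i) :
    v = v' := by
  by_contra hne
  refine (hE.2.2 i).2.1 _ h _ h' ?_ u (by simp) (by simp)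
  intro he
  exact hne (Sym2.congr_right.1 he)

/-- If every vertex has exactly as many neighbours as there are parts (at least two),
there is no decomposition. -/
lemma no_small_pmd {X : Type*} [Finite X] [Nonempty X] (G : SimpleGraph X) (r : ℕ) (hr : 2 ≤ r)
    (hdeg : ∀ u, ∃ nb : Fin r → X, Function.Injective nb ∧ ∀ i, G.Adj u (nb i)) {p : ℕ}
    (E : Fin p → Set (Sym2 X)) (hE : IsPMD G E) : r < p := by
  by_contra hp
  push Not at hp
  -- every vertex is covered by every part
  have key : p = r ∧ ∀ u (i : Fin p), ∃ v, G.Adj u v ∧ s(u, v) ∈ E i := by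
    have h0 : ∀ u, ∃ c : Fin r → Fin p, Function.Injective c ∧
        ∀ i, ∃ v, G.Adj u v ∧ s(u, v) ∈ E (c i) := by
      intro u
      obtain ⟨nb, hinj, hadj⟩ := hdeg u
      have h1 : ∀ i, ∃ k, s(u, nb i) ∈ E k := by
        intro i
        have : s(u, nb i) ∈ ⋃ k, E k := by
          rw [hE.2.1]
          exact hadj i
        exact Set.mem_iUnion.1 this
      choose c hc using h1
      refine ⟨c, ?_, fun i => ⟨nb i, hadj i, hc i⟩⟩
      intro i j hij
      have hj := hc j
      rw [← hij] at hj
      exact hinj (hE.inj (hc i) hj)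
    have hpr : p = r := by
      obtain ⟨c, hc, _⟩ := h0 (Classical.arbitrary X)
      have := Fintype.card_le_of_injective c hc
      simp only [Fintype.card_fin] at this
      omega
    refine ⟨hpr, ?_⟩
    subst hpr
    intro u i
    obtain ⟨c, hc, hc'⟩ := h0 u
    obtain ⟨j, rfl⟩ := (Finite.injective_iff_surjective.1 hc) i
    exact hc' j
  obtain ⟨rfl, key⟩ := key
  let i0 : Fin p := ⟨0, by omega⟩
  let i1 : Fin p := ⟨1, by omega⟩
  obtain ⟨-, -, w, hw⟩ := hE.2.2 i0
  have hw' : ∀ u v, G.Adj u v → (0 < w u + w v ↔ s(u, v) ∈ E i0) := by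
    intro u v huv
    apply hw
    rw [SimpleGraph.deleteEdges_adj]
    refine ⟨huv, ?_⟩
    simp only [Set.mem_iUnion, not_exists]
    intro j hj
    exact absurd hj (by simp [i0, Fin.lt_def])
  obtain ⟨v, hv⟩ := Finite.exists_min w
  obtain ⟨u, hvu, hu⟩ := key v i0
  obtain ⟨x, hux, hx⟩ := key u i1
  have h1 := (hw' v u hvu).2 hu
  have h2 : ¬ 0 < w u + w x := by
    rw [hw' u x hux]
    intro h
    exact Set.disjoint_left.1 (hE.1 i0 i1 (by simp [i0, i1])) h hx
  have h3 := hv x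
  linarith

lemma exists_nx {m : ℕ} (hm : 3 ≤ m) (u : Fin m) :
    ∃ v v', v ≠ v' ∧ (cycleGraph m).Adj u v ∧ (cycleGraph m).Adj u v' := by
  have hu := u.2
  have h1 : ∃ v, Nx m u v := by
    by_cases h : u.val + 1 = m
    · exact ⟨⟨0, by omega⟩, Or.inr ⟨h, rfl⟩⟩
    · exact ⟨⟨u.val + 1, by omega⟩, Or.inl rfl⟩
  have h2 : ∃ v, Nx m v u := by
    by_cases h : u.val = 0
    · exact ⟨⟨m - 1, by omega⟩, Or.inr ⟨by simp only; omega, h⟩⟩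
    · exact ⟨⟨u.val - 1, by omega⟩, Or.inl (by simp only; omega)⟩
  obtain ⟨v, hv⟩ := h1
  obtain ⟨v', hv'⟩ := h2
  refine ⟨v, v', ?_, (cyc_adj hm _ _).2 (Or.inl hv), (cyc_adj hm _ _).2 (Or.inr hv')⟩
  rintro rfl
  unfold Nx at hv hv'
  omega

lemma torus_deg (m n : ℕ) (hm : 3 ≤ m) (hn : 3 ≤ n) (u : Fin m × Fin n) :
    ∃ nb : Fin 4 → Fin m × Fin n, Function.Injective nb ∧
      ∀ i, (cycleGraph m □ cycleGraph n).Adj u (nb i) := by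
  obtain ⟨a, b⟩ := u
  obtain ⟨c, c', hc, h1, h2⟩ := exists_nx hm a
  obtain ⟨d, d', hd, h3, h4⟩ := exists_nx hn b
  have e1 := h1.ne
  have e2 := h2.ne
  have e3 := h3.ne
  have e4 := h4.ne
  refine ⟨![(c, b), (c', b), (a, d), (a, d')], ?_, ?_⟩
  · intro i j hij
    fin_cases i <;> fin_cases j <;> simp_all
  · intro i
    fin_cases i <;> simp [boxProd_adj, h1, h2, h3, h4]

/-- For all `m, n ≥ 3`, `5 ≤ pmd(Cₘ □ Cₙ) ≤ 6`. -/
theorem pmd_cycle_boxProd_cycle (m n : ℕ) (hm : 3 ≤ m) (hn : 3 ≤ n) :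
    5 ≤ pmd (cycleGraph m □ cycleGraph n) ∧ pmd (cycleGraph m □ cycleGraph n) ≤ 6 := by
  have hmem : (6 : ℕ) ∈ {p : ℕ | ∃ E : Fin p → Set (Sym2 (Fin m × Fin n)),
      IsPMD (cycleGraph m □ cycleGraph n) E} := ⟨_, torus_pmd m n hm hn⟩
  refine ⟨?_, Nat.sInf_le hmem⟩
  obtain ⟨E, hE⟩ := Nat.sInf_mem ⟨6, hmem⟩
  haveI : Nonempty (Fin m × Fin n) := ⟨(⟨0, by omega⟩, ⟨0, by omega⟩)⟩
  exact no_small_pmd _ 4 (by norm_num) (torus_deg m n hm hn) E hE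
end
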